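/- Let n ≥ 3, k an integer with 1 < k < n/2, and p > (n+2)k/(n-2k). Then the initial value problem -(1/k)·C(n-1,k-1)·(r^{n-k}|u'|^{k-1}u')' = r^{n-1}u^p, u'(0) = 0, u(0) = 1, has an entire regular solution, i.e., a solution u with u(r) > 0 for all r ≥ 0. -/

import Mathlib

open MeasureTheory Real Set Filter Asymptotics

noncomputable section

namespace KHessianPaper

/-- The binomial coefficient `C(n-1, k-1)` as a real number. -/
def binomC (n k : ℕ) : ℝ := ((n - 1).choose (k - 1) : ℝ)

/-- The flux `w(r) = r^{n-k} |u'(r)|^{k-1} u'(r)`. -/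
def flux (n k : ℕ) (u : ℝ → ℝ) (r : ℝ) : ℝ :=
  r ^ (n - k) * |deriv u r| ^ (k - 1) * deriv u r

/-- `u` is a regular solution of the radial `k`-Hessian initial value problem
`-(1/k) C(n-1,k-1) (r^{n-k} |u'|^{k-1} u')' = r^{n-1} u^p`, `u > 0`, `u'(0) = 0`, `u(0) = ρ`. -/
structure IsRegularSolution (n k : ℕ) (p ρ : ℝ) (u : ℝ → ℝ) : Prop where
  contDiffOn : ContDiffOn ℝ 1 u (Ici 0)
  deriv_zero : derivWithin u (Ici 0) 0 = 0
  init : u 0 = ρ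
  pos : ∀ r : ℝ, 0 ≤ r → 0 < u r
  eqn : ∀ r : ℝ, 0 < r →
    HasDerivAt (flux n k u) (-((k : ℝ) / binomC n k) * r ^ (n - 1) * u r ^ p) r
  radial_smooth : ContDiff ℝ 2 (fun x : EuclideanSpace ℝ (Fin n) => -u ‖x‖)

/-- `φ : [0,∞) → ℝ` is the radial profile of a smooth compactly supported function on `ℝⁿ`. -/
def MemWStar (n : ℕ) (φ : ℝ → ℝ) : Prop :=
  ∃ Φ : EuclideanSpace ℝ (Fin n) → ℝ,
    ContDiff ℝ (⊤ : ℕ∞) Φ ∧ HasCompactSupport Φ ∧ ∀ x, Φ x = φ ‖x‖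

/-- The weak form of the equation tested against `φ`. -/
def WeakEqn (n k : ℕ) (p : ℝ) (u φ : ℝ → ℝ) : Prop :=
  ∫ r in Ioi (0 : ℝ),
      ((1 / (k : ℝ)) * binomC n k * r ^ (n - k) * |deriv u r| ^ (k - 1) * deriv u r
          * deriv φ r
        - r ^ (n - 1) * u r ^ p * φ r) = 0

/-- The second-variation quadratic form `Q_u(φ)`. -/
def Qform (n k : ℕ) (p : ℝ) (u φ : ℝ → ℝ) : ℝ :=
  binomC n k * ∫ r in Ioi (0 : ℝ), r ^ (n - k) * |deriv u r| ^ (k - 1) * (deriv φ r) ^ 2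
    - p * ∫ r in Ioi (0 : ℝ), r ^ (n - 1) * u r ^ (p - 1) * (φ r) ^ 2

/-- `u` is a positive stable solution of the radial `k`-Hessian equation. -/
def IsStableSolution (n k : ℕ) (p : ℝ) (u : ℝ → ℝ) : Prop :=
  (∀ r : ℝ, 0 < r → 0 < u r) ∧ ContDiffOn ℝ 1 u (Ioi 0) ∧
  (∀ φ, MemWStar n φ → WeakEqn n k p u φ) ∧
  (∀ φ, MemWStar n φ → 0 ≤ Qform n k p u φ)

/-- `u` is a positive stable solution on `(R,∞)` of the radial `k`-Hessian equation. -/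
def IsStableSolutionOn (n k : ℕ) (p : ℝ) (R : ℝ) (u : ℝ → ℝ) : Prop :=
  (∀ r : ℝ, 0 < r → 0 < u r) ∧ ContDiffOn ℝ 1 u (Ioi 0) ∧
  (∀ φ, MemWStar n φ → WeakEqn n k p u φ) ∧
  (∀ φ : ℝ → ℝ, ContDiff ℝ (⊤ : ℕ∞) φ → HasCompactSupport φ → tsupport φ ⊆ Ioi R →
    0 ≤ Qform n k p u φ)

/-- The constant `A` in the singular solution `u_s(r) = A r^{-2k/(p-k)}`. -/
def Aconst (n k : ℕ) (p : ℝ) : ℝ :=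
  ((1 / (k : ℝ)) * binomC n k) ^ (1 / (p - k))
    * (2 * (k : ℝ) / (p - (k : ℝ))) ^ ((k : ℝ) / (p - k))
    * ((n : ℝ) - 2 * p * k / (p - k)) ^ (1 / (p - k))

/-- The singular solution `u_s(r) = A r^{-2k/(p-k)}`. -/
def uSing (n k : ℕ) (p : ℝ) (r : ℝ) : ℝ := Aconst n k p * r ^ (-(2 * (k : ℝ) / (p - k)))

/-- The Joseph–Lundgren exponent (finite form, relevant when `n > 2k+8`). -/
def pJL (n k : ℕ) : ℝ :=
  ((k : ℝ) * ((n : ℝ) ^ 2 - 2 * ((k : ℝ) + 3) * (n : ℝ) + 4 * (k : ℝ))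
      + 4 * (k : ℝ) * Real.sqrt (2 * ((k : ℝ) + 1) * (n : ℝ) - 4 * (k : ℝ)))
    / (((n : ℝ) - 2 * (k : ℝ)) * ((n : ℝ) - 2 * (k : ℝ) - 8))

/-- The exponent `p* = k(n+2k)/(n-2k)`. -/
def pStar (n k : ℕ) : ℝ := (k : ℝ) * ((n : ℝ) + 2 * (k : ℝ)) / ((n : ℝ) - 2 * (k : ℝ))

/-!
Write `u' = -r G`. Integrating the equation once gives `Gᵏ = c m`, where `m(r)` is the mean of
`u ^ p` over the ball of radius `r`, so the problem is the Volterra equation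
`u = 1 - ∫₀ʳ t (c m)^(1/k) dt`. Its right-hand side is not Lipschitz where `u` approaches `0`;
truncating `u` below by a decaying barrier `η > 0` makes it globally Lipschitz on each `[0, r]`, and
the contraction principle in a weighted sup norm solves the truncated problem on all of `[0, ∞)`.

As long as `u ≥ η` the truncation is inactive, and for critical or supercritical `p` the Pohozaev
functional is then nonincreasing from the value `0`. This yields `r² G ≤ δ u` with
`δ = (n - 2k) / k`, that is, `r ^ δ * u` is nondecreasing. With `η` a small multiple of `r ^ (-δ)`
at infinity, `u` therefore never reaches `η`, and the truncated solution solves the original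
equation.

Finally, the gradient of `x ↦ -u(|x|)` is the field `G(|x|) x`, and it is continuously
differentiable at the origin because `r G'(r) → 0` as `r → 0`.
-/

section Volterra

variable {E : Type*} [NormedAddCommGroup E] {Φ : (ℝ → E) → ℝ → E} {K : ℝ → ℝ}

/-- A causal operator `Φ` on continuous functions whose value at a time `t ≥ 0` is bounded by `K t`
and is `K t`-Lipschitz in the restriction of the argument to `[0, t]`; this is the right-hand side
of a Volterra equation `y' = Φ y`. Nothing is asked at negative times. -/
structure IsVolterraLipschitz (Φ : (ℝ → E) → ℝ → E) (K : ℝ → ℝ) : Prop where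
  continuous_rate : Continuous K
  continuous_apply : ∀ {y}, Continuous y → Continuous (Φ y)
  norm_le : ∀ {y}, Continuous y → ∀ {t}, 0 ≤ t → ‖Φ y t‖ ≤ K t
  norm_sub_le : ∀ {y z}, Continuous y → Continuous z → ∀ {t M}, 0 ≤ t →
    (∀ s ∈ Icc 0 t, ‖y s - z s‖ ≤ M) → ‖Φ y t - Φ z t‖ ≤ K t * M

lemma IsVolterraLipschitz.rate_nonneg (hΦ : IsVolterraLipschitz Φ K) {t : ℝ} (ht : 0 ≤ t) :
    0 ≤ K t :=
  (norm_nonneg _).trans (hΦ.norm_le continuous_zero ht)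

/-- The Bielecki weight `exp (2 ∫₀ʳ K)`. In the sup norm weighted by its inverse, a Volterra
operator with rate `K` is `1/2`-Lipschitz on the whole half-line. -/
def bieleckiWeight (K : ℝ → ℝ) (r : ℝ) : ℝ := exp (2 * ∫ t in (0 : ℝ)..r, K t)

lemma bieleckiWeight_pos (K : ℝ → ℝ) (r : ℝ) : 0 < bieleckiWeight K r := exp_pos _

lemma hasDerivAt_bieleckiWeight (hK : Continuous K) (r : ℝ) :
    HasDerivAt (bieleckiWeight K) (2 * (K r * bieleckiWeight K r)) r :=
  (((hK.integral_hasStrictDerivAt 0 r).hasDerivAt.const_mul 2).exp).congr_deriv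
    (by rw [bieleckiWeight]; ring)

lemma continuous_bieleckiWeight (hK : Continuous K) : Continuous (bieleckiWeight K) :=
  continuous_iff_continuousAt.2 fun r => (hasDerivAt_bieleckiWeight hK r).continuousAt

lemma monotoneOn_bieleckiWeight (hK : Continuous K) (hK₀ : ∀ t, 0 ≤ t → 0 ≤ K t) :
    MonotoneOn (bieleckiWeight K) (Ici 0) := by
  refine monotoneOn_of_hasDerivWithinAt_nonneg (convex_Ici 0)
    (continuous_bieleckiWeight hK).continuousOn
    (fun r _ => (hasDerivAt_bieleckiWeight hK r).hasDerivWithinAt) fun r hr => ?_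
  have hKr := hK₀ r (interior_subset hr)
  have hω := bieleckiWeight_pos K r
  positivity

lemma integral_mul_bieleckiWeight (hK : Continuous K) (r : ℝ) :
    ∫ t in (0 : ℝ)..r, K t * bieleckiWeight K t = (bieleckiWeight K r - 1) / 2 := by
  have hω := continuous_bieleckiWeight hK
  have hderiv (t : ℝ) : HasDerivAt (fun t => bieleckiWeight K t / 2) (K t * bieleckiWeight K t) t :=
    ((hasDerivAt_bieleckiWeight hK t).div_const 2).congr_deriv (by ring)
  rw [intervalIntegral.integral_eq_sub_of_hasDerivAt (fun t _ => hderiv t)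
    ((hK.mul hω).intervalIntegrable _ _)]
  simp only [bieleckiWeight, intervalIntegral.integral_same, mul_zero, exp_zero]
  ring

lemma integral_le_bieleckiWeight (K : ℝ → ℝ) (r : ℝ) :
    ∫ t in (0 : ℝ)..r, K t ≤ bieleckiWeight K r := by
  have h := add_one_le_exp (2 * ∫ t in (0 : ℝ)..r, K t)
  have hω := bieleckiWeight_pos K r
  rw [← bieleckiWeight] at h
  linarith

variable [NormedSpace ℝ E] {y₀ : E}

/-- The Picard map of `y = y₀ + ∫₀ʳ Φ y`, conjugated by the Bielecki weight: the unknown is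
`z = y / ω`. The absolute values extend functions on the half-line evenly to `ℝ`. -/
def bieleckiPicard (Φ : (ℝ → E) → ℝ → E) (K : ℝ → ℝ) (y₀ : E) (z : ℝ → E) (r : ℝ) : E :=
  (bieleckiWeight K |r|)⁻¹ •
    (y₀ + ∫ t in (0 : ℝ)..|r|, Φ (fun s => bieleckiWeight K |s| • z s) t)

lemma IsVolterraLipschitz.continuous_bieleckiWeight_smul (hΦ : IsVolterraLipschitz Φ K)
    {z : ℝ → E} (hz : Continuous z) : Continuous fun s => bieleckiWeight K |s| • z s :=
  ((continuous_bieleckiWeight hΦ.continuous_rate).comp continuous_abs).smul hz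

lemma IsVolterraLipschitz.continuous_bieleckiPicard (hΦ : IsVolterraLipschitz Φ K) {z : ℝ → E}
    (hz : Continuous z) : Continuous (bieleckiPicard Φ K y₀ z) := by
  have hω := (continuous_bieleckiWeight hΦ.continuous_rate).comp continuous_abs
  have hΦz := hΦ.continuous_apply (hΦ.continuous_bieleckiWeight_smul hz)
  exact (hω.inv₀ fun r => (bieleckiWeight_pos K |r|).ne').smul (continuous_const.add
    ((intervalIntegral.continuous_primitive (fun a b => hΦz.intervalIntegrable a b) 0).comp
      continuous_abs))

lemma IsVolterraLipschitz.norm_bieleckiPicard_le (hΦ : IsVolterraLipschitz Φ K) {z : ℝ → E}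
    (hz : Continuous z) (r : ℝ) : ‖bieleckiPicard Φ K y₀ z r‖ ≤ ‖y₀‖ + 1 := by
  have hK := hΦ.continuous_rate
  have hω : 1 ≤ bieleckiWeight K |r| := by
    have hmono := monotoneOn_bieleckiWeight hK (fun _ => hΦ.rate_nonneg) (mem_Ici.2 le_rfl)
      (mem_Ici.2 (abs_nonneg r)) (abs_nonneg r)
    simpa [bieleckiWeight] using hmono
  have hint : ‖∫ t in (0 : ℝ)..|r|, Φ (fun s => bieleckiWeight K |s| • z s) t‖
      ≤ bieleckiWeight K |r| :=
    (intervalIntegral.norm_integral_le_of_norm_le (abs_nonneg r)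
      (.of_forall fun t ht => hΦ.norm_le (hΦ.continuous_bieleckiWeight_smul hz) ht.1.le)
      (hK.intervalIntegrable _ _)).trans (integral_le_bieleckiWeight K |r|)
  rw [bieleckiPicard, norm_smul, norm_inv, norm_of_nonneg (bieleckiWeight_pos K |r|).le,
    inv_mul_le_iff₀ (bieleckiWeight_pos K |r|)]
  calc _ ≤ ‖y₀‖ + bieleckiWeight K |r| := (norm_add_le _ _).trans (by gcongr)
    _ ≤ bieleckiWeight K |r| * (‖y₀‖ + 1) := by nlinarith [norm_nonneg y₀]

lemma IsVolterraLipschitz.norm_bieleckiPicard_sub_le (hΦ : IsVolterraLipschitz Φ K)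
    {z₁ z₂ : ℝ → E} (hz₁ : Continuous z₁) (hz₂ : Continuous z₂) {d : ℝ}
    (hd : ∀ s, ‖z₁ s - z₂ s‖ ≤ d) (r : ℝ) :
    ‖bieleckiPicard Φ K y₀ z₁ r - bieleckiPicard Φ K y₀ z₂ r‖ ≤ 1 / 2 * d := by
  have hK := hΦ.continuous_rate
  have hd₀ : 0 ≤ d := (norm_nonneg _).trans (hd 0)
  have hy₁ := hΦ.continuous_bieleckiWeight_smul hz₁
  have hy₂ := hΦ.continuous_bieleckiWeight_smul hz₂
  have hmono := monotoneOn_bieleckiWeight hK fun _ => hΦ.rate_nonneg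
  have hpoint (t : ℝ) (ht : t ∈ Ioc 0 |r|) :
      ‖Φ (fun s => bieleckiWeight K |s| • z₁ s) t - Φ (fun s => bieleckiWeight K |s| • z₂ s) t‖
        ≤ K t * bieleckiWeight K t * d := by
    rw [mul_assoc]
    refine hΦ.norm_sub_le hy₁ hy₂ ht.1.le fun s hs => ?_
    rw [← smul_sub, norm_smul, norm_of_nonneg (bieleckiWeight_pos K |s|).le, abs_of_nonneg hs.1]
    exact mul_le_mul (hmono hs.1 ht.1.le hs.2) (hd s) (norm_nonneg _) (bieleckiWeight_pos K t).le
  have hint := intervalIntegral.norm_integral_le_of_norm_le (μ := volume) (abs_nonneg r)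
    (.of_forall hpoint)
    (((hK.mul (continuous_bieleckiWeight hK)).mul continuous_const).intervalIntegrable _ _)
  rw [intervalIntegral.integral_mul_const, integral_mul_bieleckiWeight hK,
    intervalIntegral.integral_sub ((hΦ.continuous_apply hy₁).intervalIntegrable _ _)
      ((hΦ.continuous_apply hy₂).intervalIntegrable _ _)] at hint
  rw [bieleckiPicard, bieleckiPicard, ← smul_sub, add_sub_add_left_eq_sub, norm_smul, norm_inv,
    norm_of_nonneg (bieleckiWeight_pos K |r|).le, inv_mul_le_iff₀ (bieleckiWeight_pos K |r|)]
  linarith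

theorem IsVolterraLipschitz.exists_eq_add_integral [CompleteSpace E]
    (hΦ : IsVolterraLipschitz Φ K) (y₀ : E) :
    ∃ y : ℝ → E, Continuous y ∧ ∀ r, 0 ≤ r → y r = y₀ + ∫ t in (0 : ℝ)..r, Φ y t := by
  let T (z : BoundedContinuousFunction ℝ E) : BoundedContinuousFunction ℝ E :=
    .ofNormedAddCommGroup (bieleckiPicard Φ K y₀ z) (hΦ.continuous_bieleckiPicard z.continuous)
      (‖y₀‖ + 1) (hΦ.norm_bieleckiPicard_le z.continuous)
  have hT : ContractingWith (1 / 2) T := by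
    refine ⟨by norm_num, LipschitzWith.of_dist_le_mul fun z₁ z₂ => ?_⟩
    refine (BoundedContinuousFunction.dist_le (by positivity)).2 fun r => ?_
    rw [dist_eq_norm]
    refine (hΦ.norm_bieleckiPicard_sub_le z₁.continuous z₂.continuous (d := dist z₁ z₂)
      (fun s => ?_) r).trans_eq (by simp)
    exact (dist_eq_norm _ _).symm.trans_le (BoundedContinuousFunction.dist_coe_le_dist s)
  obtain ⟨z, hz⟩ : ∃ z, T z = z := ⟨_, hT.fixedPoint_isFixedPt⟩
  refine ⟨_, hΦ.continuous_bieleckiWeight_smul z.continuous, fun r hr => ?_⟩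
  have hzr : bieleckiPicard Φ K y₀ z r = z r := congr($hz r)
  rw [← hzr, bieleckiPicard, abs_of_nonneg hr, smul_inv_smul₀ (bieleckiWeight_pos K r).ne']

end Volterra

lemma abs_rpow_sub_rpow_le {s : Set ℝ} (hs : Convex ℝ s) (hpos : s ⊆ Ioi 0) {q C : ℝ}
    (hC : ∀ z ∈ s, |q * z ^ (q - 1)| ≤ C) {x y : ℝ} (hx : x ∈ s) (hy : y ∈ s) :
    |x ^ q - y ^ q| ≤ C * |x - y| :=
  hs.norm_image_sub_le_of_norm_hasDerivWithin_le
    (fun _ hz => (hasDerivAt_rpow_const (.inl (hpos hz).ne')).hasDerivWithinAt) hC hy hx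

lemma abs_rpow_sub_rpow_le_of_one_le {p x y : ℝ} (hp : 1 ≤ p) (hx : x ∈ Ioc 0 1)
    (hy : y ∈ Ioc 0 1) : |x ^ p - y ^ p| ≤ p * |x - y| := by
  refine abs_rpow_sub_rpow_le (convex_Ioc 0 1) (fun _ hz => hz.1) (fun z hz => ?_) hx hy
  have hz' := rpow_nonneg hz.1.le (p - 1)
  rw [abs_of_nonneg (by positivity)]
  exact mul_le_of_le_one_right (by positivity) (rpow_le_one hz.1.le hz.2 (by linarith))

lemma abs_rpow_sub_rpow_le_of_le_one {q a x y : ℝ} (hq₀ : 0 ≤ q) (hq : q ≤ 1) (ha : 0 < a)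
    (hx : a ≤ x) (hy : a ≤ y) : |x ^ q - y ^ q| ≤ q * a ^ (q - 1) * |x - y| := by
  refine abs_rpow_sub_rpow_le (convex_Ici a) (fun _ hz => ha.trans_le hz) (fun z hz => ?_) hx hy
  have hz' := rpow_nonneg (ha.le.trans hz) (q - 1)
  rw [abs_of_nonneg (by positivity)]
  exact mul_le_mul_of_nonneg_left (rpow_le_rpow_of_nonpos ha hz (by linarith)) hq₀

lemma rpow_div_mul_le_of_hasDerivAt {f f' : ℝ → ℝ} {a b δ : ℝ} (ha : 0 < a) (hab : a ≤ b)
    (hf : ∀ r, HasDerivAt f (f' r) r) (hgrowth : ∀ r ∈ Ioo a b, 0 ≤ δ * f r + r * f' r) :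
    (a / b) ^ δ * f a ≤ f b := by
  have hderiv (r : ℝ) (hr : 0 < r) :
      HasDerivAt (fun r => r ^ δ * f r) (r ^ (δ - 1) * (δ * f r + r * f' r)) r := by
    refine ((hasDerivAt_rpow_const (.inl hr.ne')).mul (hf r)).congr_deriv ?_
    rw [rpow_sub_one hr.ne']
    field_simp
  have hmono : MonotoneOn (fun r => r ^ δ * f r) (Icc a b) := by
    refine monotoneOn_of_hasDerivWithinAt_nonneg (convex_Icc a b)
      (fun r hr => (hderiv r (ha.trans_le hr.1)).continuousAt.continuousWithinAt)
      (fun r hr => (hderiv r (ha.trans_le (interior_subset hr).1)).hasDerivWithinAt)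
      fun r hr => ?_
    rw [interior_Icc] at hr
    exact mul_nonneg (rpow_nonneg (ha.trans hr.1).le _) (hgrowth r hr)
  have hb : 0 < b := ha.trans_le hab
  have hle := hmono (left_mem_Icc.2 hab) (right_mem_Icc.2 hab) hab
  rwa [div_rpow ha.le hb.le, div_mul_eq_mul_div, div_le_iff₀' (rpow_pos_of_pos hb δ)]

lemma lt_of_forall_le_imp_lt {f g : ℝ → ℝ} (hf : Continuous f) (hg : Continuous g) {a : ℝ}
    (ha : f a < g a) (hstep : ∀ b, a ≤ b → (∀ x ∈ Icc a b, f x ≤ g x) → f b < g b) {b : ℝ}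
    (hab : a ≤ b) : f b < g b := by
  by_contra! hb
  have hcompact : IsCompact (Icc a b ∩ {x | g x ≤ f x}) :=
    isCompact_Icc.inter_right (isClosed_le hg hf)
  obtain ⟨c, ⟨hc, hgf⟩, hmin⟩ := hcompact.exists_isLeast ⟨b, right_mem_Icc.2 hab, hb⟩
  have hac : a < c := hc.1.lt_of_ne (by rintro rfl; exact hgf.not_gt ha)
  have hlt : Ico a c ⊆ {x | f x ≤ g x} := fun x hx => show f x ≤ g x from le_of_not_ge fun h =>
    (hmin ⟨⟨hx.1, hx.2.le.trans hc.2⟩, h⟩).not_gt hx.2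
  have hle := closure_minimal hlt (isClosed_le hf hg)
  rw [closure_Ico hac.ne] at hle
  exact hgf.not_gt (hstep c hc.1 hle)

section Radial

variable {E : Type*} [NormedAddCommGroup E] [InnerProductSpace ℝ E] {u G H : ℝ → ℝ}

lemma hasFDerivAt_norm_of_ne_zero {x : E} (hx : x ≠ 0) :
    HasFDerivAt (fun x : E => ‖x‖) (‖x‖⁻¹ • innerSL ℝ x) x := by
  have h := (hasStrictFDerivAt_norm_sq x).hasFDerivAt.sqrt (by simpa using hx)
  simp only [sqrt_sq (norm_nonneg _)] at h
  refine h.congr_fderiv ?_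
  ext y
  simp only [one_div, mul_inv_rev, smul_apply, coe_innerSL_apply, nsmul_eq_mul, Nat.cast_ofNat,
    smul_eq_mul]
  field_simp

lemma hasFDerivAt_comp_norm (hu : ∀ r, HasDerivAt u (r * G r) r) (x : E) :
    HasFDerivAt (fun x : E => u ‖x‖) (innerSL ℝ (G ‖x‖ • x)) x := by
  rcases eq_or_ne x 0 with rfl | hx
  · have hu₀ := hasDerivAt_iff_isLittleO.1 (hu 0)
    have hnorm : Tendsto (fun x : E => ‖x‖) (nhds 0) (nhds 0) := tendsto_norm_zero
    refine .of_isLittleO ((isLittleO_norm_right.1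
      ((hu₀.comp_tendsto hnorm).congr_right (g₂ := fun x : E => ‖x‖) (by simp))).congr ?_ ?_) <;>
    simp
  · refine ((hu ‖x‖).comp_hasFDerivAt x (hasFDerivAt_norm_of_ne_zero hx)).congr_fderiv ?_
    have hx₀ := norm_ne_zero_iff.2 hx
    ext y
    simp only [smul_apply, coe_innerSL_apply, smul_eq_mul, map_smul]
    field_simp

/-- The derivative of the vector field `x ↦ G(|x|) x` when `G'(r) = H(r) / r`. -/
def radialFieldFDeriv (G H : ℝ → ℝ) (x : E) : E →L[ℝ] E :=
  G ‖x‖ • ContinuousLinearMap.id ℝ E +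
    (H ‖x‖ * ‖x‖⁻¹ * ‖x‖⁻¹) • ContinuousLinearMap.smulRight (innerSL ℝ x) x

lemma continuous_radialFieldFDeriv (hG : Continuous G) (hH : Continuous H) (hH₀ : H 0 = 0) :
    Continuous (radialFieldFDeriv G H : E → E →L[ℝ] E) := by
  refine Continuous.add (by fun_prop) (continuous_iff_continuousAt.2 fun x => ?_)
  have hHnorm : Continuous fun x : E => H ‖x‖ := by fun_prop
  rcases eq_or_ne x 0 with rfl | hx
  · have hlim : Tendsto (fun x : E => ‖H ‖x‖‖) (nhds 0) (nhds 0) := by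
      simpa [hH₀] using hHnorm.norm.tendsto (0 : E)
    rw [ContinuousAt, map_zero, ContinuousLinearMap.smulRight_zero, smul_zero]
    refine squeeze_zero_norm (fun x => ?_) hlim
    rcases eq_or_ne x 0 with rfl | hx
    · simp
    · have hx₀ := norm_ne_zero_iff.2 hx
      rw [norm_smul, ContinuousLinearMap.norm_smulRight_apply, innerSL_apply_norm, norm_mul,
        norm_mul, norm_inv, norm_norm]
      field_simp
      rfl
  · have hinv : ContinuousAt (fun x : E => ‖x‖⁻¹) x :=
      continuousAt_id.norm.inv₀ (norm_ne_zero_iff.2 hx)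
    have hproj : Continuous fun x : E => ContinuousLinearMap.smulRight (innerSL ℝ x) x := by
      fun_prop
    exact ((hHnorm.continuousAt.mul hinv).mul hinv).smul hproj.continuousAt

lemma hasFDerivAt_radialField (hG : Continuous G)
    (hGH : ∀ r, 0 < r → HasDerivAt G (H r / r) r) (x : E) :
    HasFDerivAt (fun x : E => G ‖x‖ • x) (radialFieldFDeriv G H x) x := by
  rcases eq_or_ne x 0 with rfl | hx
  · have hcont : Continuous fun x : E => G ‖x‖ - G 0 := by fun_prop
    have hlim : Tendsto (fun x : E => G ‖x‖ - G 0) (nhds 0) (nhds 0) := by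
      simpa using hcont.tendsto 0
    refine .of_isLittleO ((((isLittleO_one_iff ℝ).2 hlim).smul_isBigO
      (isBigO_refl (fun x : E => x) _)).congr ?_ ?_) <;>
    simp [radialFieldFDeriv, sub_smul]
  · refine (((hGH ‖x‖ (norm_pos_iff.2 hx)).comp_hasFDerivAt x
      (hasFDerivAt_norm_of_ne_zero hx)).smul (hasFDerivAt_id x)).congr_fderiv ?_
    ext1 y
    simp [radialFieldFDeriv, smul_smul, div_eq_mul_inv]

theorem contDiff_two_comp_norm (hG : Continuous G) (hH : Continuous H) (hH₀ : H 0 = 0)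
    (hGH : ∀ r, 0 < r → HasDerivAt G (H r / r) r) (hu : ∀ r, HasDerivAt u (r * G r) r) :
    ContDiff ℝ 2 (fun x : E => u ‖x‖) := by
  have hfield : ContDiff ℝ 1 (fun x : E => G ‖x‖ • x) :=
    contDiff_one_iff_hasFDerivAt.2 ⟨radialFieldFDeriv G H,
      continuous_radialFieldFDeriv hG hH hH₀, hasFDerivAt_radialField hG hGH⟩
  rw [show (2 : WithTop ℕ∞) = (1 : ℕ) + 1 by norm_num, contDiff_succ_iff_hasFDerivAt]
  exact ⟨_, mod_cast (innerSL ℝ).contDiff.comp hfield, hasFDerivAt_comp_norm hu⟩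

end Radial

section RadialMean

/-- The average over the ball of radius `t` in `ℝⁿ` of the radial function `x ↦ F |x|`, rescaled to
the unit ball so that it also makes sense at `t = 0`. -/
def radialMean (n : ℕ) (F : ℝ → ℝ) (t : ℝ) : ℝ :=
  n * ∫ σ in (0 : ℝ)..1, σ ^ (n - 1) * F (t * σ)

variable {n : ℕ} {F F₁ F₂ : ℝ → ℝ}

lemma continuous_radialMean (n : ℕ) (hF : Continuous F) : Continuous (radialMean n F) :=
  continuous_const.mul
    (intervalIntegral.continuous_parametric_intervalIntegral_of_continuous' (by fun_prop) 0 1)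

lemma intervalIntegrable_radialMean (n : ℕ) (hF : Continuous F) (t : ℝ) :
    IntervalIntegrable (fun σ => σ ^ (n - 1) * F (t * σ)) volume 0 1 :=
  Continuous.intervalIntegrable (by fun_prop) _ _

lemma radialMean_const (hn : n ≠ 0) (a t : ℝ) : radialMean n (fun _ => a) t = a := by
  obtain ⟨m, rfl⟩ := Nat.exists_eq_succ_of_ne_zero hn
  rw [radialMean, intervalIntegral.integral_mul_const, integral_pow]
  simp only [Nat.succ_eq_add_one, Nat.add_sub_cancel, one_pow, zero_pow m.succ_ne_zero, sub_zero,
    Nat.cast_add, Nat.cast_one]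
  field_simp

lemma radialMean_zero (hn : n ≠ 0) (F : ℝ → ℝ) : radialMean n F 0 = F 0 := by
  rw [← radialMean_const hn (F 0) 0]
  simp only [radialMean, zero_mul]

lemma radialMean_sub (n : ℕ) (hF₁ : Continuous F₁) (hF₂ : Continuous F₂) (t : ℝ) :
    radialMean n (fun s => F₁ s - F₂ s) t = radialMean n F₁ t - radialMean n F₂ t := by
  simp only [radialMean, mul_sub]
  rw [intervalIntegral.integral_sub (intervalIntegrable_radialMean n hF₁ t)
    (intervalIntegrable_radialMean n hF₂ t), mul_sub]

lemma radialMean_mono (n : ℕ) (hF₁ : Continuous F₁) (hF₂ : Continuous F₂) {t : ℝ}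
    (h : ∀ s ∈ uIcc 0 t, F₁ s ≤ F₂ s) : radialMean n F₁ t ≤ radialMean n F₂ t := by
  refine mul_le_mul_of_nonneg_left (intervalIntegral.integral_mono_on zero_le_one
    (intervalIntegrable_radialMean n hF₁ t) (intervalIntegrable_radialMean n hF₂ t)
    fun σ hσ => mul_le_mul_of_nonneg_left (h _ ?_) (pow_nonneg hσ.1 _)) n.cast_nonneg
  rw [mul_comm]
  exact ((convex_uIcc 0 t).starConvex left_mem_uIcc).smul_mem right_mem_uIcc hσ.1 hσ.2

lemma le_radialMean (hn : n ≠ 0) (hF : Continuous F) {a t : ℝ} (h : ∀ s ∈ uIcc 0 t, a ≤ F s) :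
    a ≤ radialMean n F t :=
  (radialMean_const hn a t).ge.trans (radialMean_mono n continuous_const hF h)

lemma radialMean_le (hn : n ≠ 0) (hF : Continuous F) {a t : ℝ} (h : ∀ s ∈ uIcc 0 t, F s ≤ a) :
    radialMean n F t ≤ a :=
  (radialMean_mono n hF continuous_const h).trans_eq (radialMean_const hn a t)

lemma abs_radialMean_sub_le (hn : n ≠ 0) (hF₁ : Continuous F₁) (hF₂ : Continuous F₂) {M t : ℝ}
    (h : ∀ s ∈ uIcc 0 t, |F₁ s - F₂ s| ≤ M) : |radialMean n F₁ t - radialMean n F₂ t| ≤ M := by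
  rw [← radialMean_sub n hF₁ hF₂]
  exact abs_le.2 ⟨le_radialMean hn (hF₁.sub hF₂) fun s hs => (abs_le.1 (h s hs)).1,
    radialMean_le hn (hF₁.sub hF₂) fun s hs => (abs_le.1 (h s hs)).2⟩

lemma radialMean_pos (hn : n ≠ 0) (hF : Continuous F) (hpos : ∀ s, 0 < F s) (t : ℝ) :
    0 < radialMean n F t := by
  obtain ⟨s₀, -, hs₀⟩ := isCompact_uIcc.exists_isMinOn (nonempty_uIcc (a := 0) (b := t))
    hF.continuousOn
  exact (hpos s₀).trans_le (le_radialMean hn hF hs₀)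

lemma pow_mul_radialMean (hn : n ≠ 0) (F : ℝ → ℝ) (t : ℝ) :
    t ^ n * radialMean n F t = n * ∫ s in (0 : ℝ)..t, s ^ (n - 1) * F s := by
  obtain ⟨m, rfl⟩ := Nat.exists_eq_succ_of_ne_zero hn
  have hsubst := intervalIntegral.mul_integral_comp_mul_left (a := 0) (b := 1)
    (f := fun s => s ^ m * F s) t
  simp only [mul_zero, mul_one, mul_pow, mul_assoc, intervalIntegral.integral_const_mul] at hsubst
  simp only [radialMean, Nat.succ_eq_add_one, Nat.add_sub_cancel, ← hsubst]
  ring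

lemma hasDerivAt_pow_mul_radialMean (hn : n ≠ 0) (hF : Continuous F) (t : ℝ) :
    HasDerivAt (fun t => t ^ n * radialMean n F t) (n * (t ^ (n - 1) * F t)) t := by
  simp_rw [pow_mul_radialMean hn F]
  have hcont : Continuous fun s => s ^ (n - 1) * F s := by fun_prop
  exact (hcont.integral_hasStrictDerivAt 0 t).hasDerivAt.const_mul _

lemma hasDerivAt_radialMean (hn : n ≠ 0) (hF : Continuous F) {t : ℝ} (ht : t ≠ 0) :
    HasDerivAt (radialMean n F) (n * (F t - radialMean n F t) / t) t := by
  have hquot := (hasDerivAt_pow_mul_radialMean hn hF t).div (hasDerivAt_pow n t) (pow_ne_zero n ht)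
  have heq : radialMean n F =ᶠ[nhds t] ((fun t => t ^ n * radialMean n F t) / fun t => t ^ n) := by
    filter_upwards [eventually_ne_nhds ht] with s hs
    exact (mul_div_cancel_left₀ _ (pow_ne_zero n hs)).symm
  refine (hquot.congr_of_eventuallyEq heq).congr_deriv ?_
  obtain ⟨m, rfl⟩ := Nat.exists_eq_succ_of_ne_zero hn
  simp only [Nat.succ_eq_add_one, Nat.add_sub_cancel]
  field_simp
  ring

end RadialMean

section RadialProfile

/-- The function `G` such that `w(r) = -rⁿ G(r)ᵏ` solves `w' = -n c rⁿ⁻¹ F`. The exponent `k` is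
allowed to be real. -/
def radialSlope (n : ℕ) (k c : ℝ) (F : ℝ → ℝ) (t : ℝ) : ℝ := (c * radialMean n F t) ^ k⁻¹

/-- The solution of the radial `k`-Hessian problem with source `F` in place of `u ^ p`:
`u(0) = 1` and `u'(r) = -r G(r)` with `G` the `radialSlope` of `F`. -/
def radialProfile (n : ℕ) (k c : ℝ) (F : ℝ → ℝ) (r : ℝ) : ℝ :=
  1 - ∫ t in (0 : ℝ)..r, t * radialSlope n k c F t

variable {n : ℕ} {k c : ℝ} {F F₁ F₂ : ℝ → ℝ}

lemma radialSlope_pos (hn : n ≠ 0) (hc : 0 < c) (hF : Continuous F) (hpos : ∀ s, 0 < F s)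
    (t : ℝ) : 0 < radialSlope n k c F t :=
  rpow_pos_of_pos (mul_pos hc (radialMean_pos hn hF hpos t)) _

lemma radialSlope_rpow (hn : n ≠ 0) (hk : k ≠ 0) (hc : 0 < c) (hF : Continuous F)
    (hpos : ∀ s, 0 < F s) (t : ℝ) : radialSlope n k c F t ^ k = c * radialMean n F t :=
  rpow_inv_rpow (mul_pos hc (radialMean_pos hn hF hpos t)).le hk

lemma continuous_radialSlope (n : ℕ) (hk : 0 ≤ k) (c : ℝ) (hF : Continuous F) :
    Continuous (radialSlope n k c F) :=
  (continuous_const.mul (continuous_radialMean n hF)).rpow_const fun _ => .inr (inv_nonneg.2 hk)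

lemma radialSlope_le (hn : n ≠ 0) (hk : 0 ≤ k) (hc : 0 < c) (hF : Continuous F)
    (hpos : ∀ s, 0 < F s) (hF₁ : ∀ s, F s ≤ 1) (t : ℝ) : radialSlope n k c F t ≤ c ^ k⁻¹ :=
  rpow_le_rpow (mul_pos hc (radialMean_pos hn hF hpos t)).le
    (mul_le_of_le_one_right hc.le (radialMean_le hn hF fun s _ => hF₁ s)) (inv_nonneg.2 hk)

lemma abs_radialSlope_sub_le (hn : n ≠ 0) (hk : 1 ≤ k) (hc : 0 < c) (hF₁ : Continuous F₁)
    (hF₂ : Continuous F₂) {a M t : ℝ} (ha : 0 < a) (ha₁ : ∀ s ∈ uIcc 0 t, a ≤ F₁ s)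
    (ha₂ : ∀ s ∈ uIcc 0 t, a ≤ F₂ s) (hM : ∀ s ∈ uIcc 0 t, |F₁ s - F₂ s| ≤ M) :
    |radialSlope n k c F₁ t - radialSlope n k c F₂ t| ≤ k⁻¹ * (c * a) ^ (k⁻¹ - 1) * (c * M) := by
  refine (abs_rpow_sub_rpow_le_of_le_one (by positivity) (inv_le_one_of_one_le₀ hk)
    (mul_pos hc ha) (mul_le_mul_of_nonneg_left (le_radialMean hn hF₁ ha₁) hc.le)
    (mul_le_mul_of_nonneg_left (le_radialMean hn hF₂ ha₂) hc.le)).trans ?_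
  rw [← mul_sub, abs_mul, abs_of_pos hc]
  gcongr
  exact abs_radialMean_sub_le hn hF₁ hF₂ hM

/-- The function `r ↦ r G'(r)` for the `radialSlope` `G` of `F`, in a form that is regular at the
origin. -/
def radialSlopeLogDeriv (n : ℕ) (k c : ℝ) (F : ℝ → ℝ) (r : ℝ) : ℝ :=
  n / k * (radialSlope n k c F r * (F r / radialMean n F r - 1))

lemma hasDerivAt_radialSlope (hn : n ≠ 0) (hc : 0 < c) (hF : Continuous F)
    (hpos : ∀ s, 0 < F s) {t : ℝ} (ht : t ≠ 0) :
    HasDerivAt (radialSlope n k c F) (radialSlopeLogDeriv n k c F t / t) t := by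
  have hmean := radialMean_pos hn hF hpos t
  have hbase := mul_pos hc hmean
  refine (((hasDerivAt_radialMean hn hF ht).const_mul c).rpow_const (.inl hbase.ne')).congr_deriv ?_
  rw [rpow_sub_one hbase.ne', radialSlopeLogDeriv, radialSlope]
  field_simp

lemma continuous_radialSlopeLogDeriv (hn : n ≠ 0) (hk : 0 ≤ k) (c : ℝ) (hF : Continuous F)
    (hpos : ∀ s, 0 < F s) : Continuous (radialSlopeLogDeriv n k c F) :=
  continuous_const.mul ((continuous_radialSlope n hk c hF).mul
    ((hF.div (continuous_radialMean n hF) fun s => (radialMean_pos hn hF hpos s).ne').sub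
      continuous_const))

lemma radialSlopeLogDeriv_zero (hn : n ≠ 0) (k c : ℝ) (hpos : ∀ s, 0 < F s) :
    radialSlopeLogDeriv n k c F 0 = 0 := by
  rw [radialSlopeLogDeriv, radialMean_zero hn, div_self (hpos 0).ne', sub_self, mul_zero, mul_zero]

lemma radialProfile_zero (n : ℕ) (k c : ℝ) (F : ℝ → ℝ) : radialProfile n k c F 0 = 1 := by
  rw [radialProfile, intervalIntegral.integral_same, sub_zero]

lemma hasDerivAt_radialProfile (n : ℕ) (hk : 0 ≤ k) (c : ℝ) (hF : Continuous F) (r : ℝ) :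
    HasDerivAt (radialProfile n k c F) (-(r * radialSlope n k c F r)) r :=
  ((continuous_id.mul (continuous_radialSlope n hk c hF)).integral_hasStrictDerivAt 0
    r).hasDerivAt.const_sub 1

lemma continuous_radialProfile (n : ℕ) (hk : 0 ≤ k) (c : ℝ) (hF : Continuous F) :
    Continuous (radialProfile n k c F) :=
  continuous_iff_continuousAt.2 fun r => (hasDerivAt_radialProfile n hk c hF r).continuousAt

lemma radialProfile_le_one (hn : n ≠ 0) (hc : 0 < c) (hF : Continuous F) (hpos : ∀ s, 0 < F s)
    {r : ℝ} (hr : 0 ≤ r) : radialProfile n k c F r ≤ 1 :=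
  sub_le_self 1 <| intervalIntegral.integral_nonneg hr fun t ht =>
    mul_nonneg ht.1 (radialSlope_pos hn hc hF hpos t).le

lemma one_sub_le_radialProfile (hn : n ≠ 0) (hk : 0 ≤ k) (hc : 0 < c) (hF : Continuous F)
    (hpos : ∀ s, 0 < F s) (hF₁ : ∀ s, F s ≤ 1) {r : ℝ} (hr : 0 ≤ r) :
    1 - c ^ k⁻¹ * r ^ 2 / 2 ≤ radialProfile n k c F r := by
  have hG := continuous_radialSlope n hk c hF
  have hint : ∫ t in (0 : ℝ)..r, t * radialSlope n k c F t ≤ ∫ t in (0 : ℝ)..r, t * c ^ k⁻¹ :=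
    intervalIntegral.integral_mono_on hr (Continuous.intervalIntegrable (by fun_prop) _ _)
      (Continuous.intervalIntegrable (by fun_prop) _ _) fun t ht =>
        mul_le_mul_of_nonneg_left (radialSlope_le hn hk hc hF hpos hF₁ t) ht.1
  rw [intervalIntegral.integral_mul_const, integral_id] at hint
  rw [radialProfile]
  linarith

end RadialProfile

section Pohozaev

/-- The Pohozaev functional of the `radialProfile` of `F`, written with the mean of `F` and the
slope `G = -u' / r`. -/
def pohozaev (n : ℕ) (k c p : ℝ) (F : ℝ → ℝ) (r : ℝ) : ℝ :=
  r ^ n * (k / (k + 1) * (r ^ 2 * (radialMean n F r * radialSlope n k c F r)) +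
    n / (p + 1) * (radialProfile n k c F r * (radialProfile n k c F r ^ p - radialMean n F r)))

variable {n : ℕ} {k c p R : ℝ} {F : ℝ → ℝ}

lemma hasDerivAt_pohozaev (hn : n ≠ 0) (hk : 0 < k) (hc : 0 < c) (hp : -1 < p)
    (hF : Continuous F) (hpos : ∀ s, 0 < F s) {r : ℝ} (hr : r ≠ 0)
    (hu : 0 < radialProfile n k c F r) (hFu : F r = radialProfile n k c F r ^ p) :
    HasDerivAt (pohozaev n k c p F)
      (r ^ (n + 1) * (radialMean n F r * radialSlope n k c F r) *
        (n / (p + 1) - (n - 2 * k) / (k + 1))) r := by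
  have hprofile := hasDerivAt_radialProfile n hk.le c hF r
  have hmean := hasDerivAt_radialMean hn hF hr
  have hslope := hasDerivAt_radialSlope (k := k) hn hc hF hpos hr
  have hkinetic := ((hasDerivAt_pow 2 r).mul (hmean.mul hslope)).const_mul (k / (k + 1))
  have hpotential := (hprofile.mul
    ((hprofile.rpow_const (p := p) (.inl hu.ne')).sub hmean)).const_mul (n / (p + 1))
  refine ((hasDerivAt_pow n r).mul (hkinetic.add hpotential)).congr_deriv ?_
  have hm₀ := (radialMean_pos hn hF hpos r).ne'
  have hp₀ : p + 1 ≠ 0 := by linarith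
  obtain ⟨m, rfl⟩ := Nat.exists_eq_succ_of_ne_zero hn
  simp only [Pi.mul_apply, Pi.add_apply, Pi.sub_apply, radialSlopeLogDeriv, rpow_sub_one hu.ne',
    ← hFu, Nat.succ_eq_add_one, Nat.add_sub_cancel]
  field_simp
  ring

lemma antitoneOn_pohozaev (hn : n ≠ 0) (hk : 0 < k) (hc : 0 < c) (hp : -1 < p)
    (hcrit : n / (p + 1) ≤ (n - 2 * k) / (k + 1)) (hF : Continuous F) (hpos : ∀ s, 0 < F s)
    (hu : ∀ r ∈ Icc 0 R, 0 < radialProfile n k c F r)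
    (hFu : ∀ r ∈ Icc 0 R, F r = radialProfile n k c F r ^ p) :
    AntitoneOn (pohozaev n k c p F) (Icc 0 R) := by
  have hmean := continuous_radialMean n hF
  have hslope := continuous_radialSlope n hk.le c hF
  have hprofile := continuous_radialProfile n hk.le c hF
  have hcont : ContinuousOn (pohozaev n k c p F) (Icc 0 R) := by
    have hpow : ContinuousOn (fun r => radialProfile n k c F r ^ p) (Icc 0 R) :=
      hprofile.continuousOn.rpow_const fun r hr => .inl (hu r hr).ne'
    unfold pohozaev
    fun_prop
  have hderiv (r : ℝ) (hr : r ∈ interior (Icc 0 R)) := by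
    have hrR := interior_subset hr
    rw [interior_Icc] at hr
    exact hasDerivAt_pohozaev hn hk hc hp hF hpos hr.1.ne' (hu r hrR) (hFu r hrR)
  refine antitoneOn_of_hasDerivWithinAt_nonpos (convex_Icc 0 R) hcont
    (fun r hr => (hderiv r hr).hasDerivWithinAt)
    fun r hr => mul_nonpos_of_nonneg_of_nonpos (mul_nonneg ?_ ?_) (sub_nonpos.2 hcrit)
  · exact pow_nonneg (interior_subset hr).1 _
  · exact (mul_pos (radialMean_pos hn hF hpos r) (radialSlope_pos hn hc hF hpos r)).le

lemma sq_mul_radialSlope_le (hn : n ≠ 0) (hk : 0 < k) (hc : 0 < c) (hp : -1 < p)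
    (hcrit : n / (p + 1) ≤ (n - 2 * k) / (k + 1)) (hF : Continuous F) (hpos : ∀ s, 0 < F s)
    (hu : ∀ r ∈ Icc 0 R, 0 < radialProfile n k c F r)
    (hFu : ∀ r ∈ Icc 0 R, F r = radialProfile n k c F r ^ p) {r : ℝ} (hr : r ∈ Ioc 0 R) :
    r ^ 2 * radialSlope n k c F r ≤ (n - 2 * k) / k * radialProfile n k c F r := by
  have hP : pohozaev n k c p F r ≤ 0 := by
    have hanti := antitoneOn_pohozaev hn hk hc hp hcrit hF hpos hu hFu
      (left_mem_Icc.2 (hr.1.le.trans hr.2)) (Ioc_subset_Icc_self hr) hr.1.le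
    simpa [pohozaev, hn] using hanti
  have hur := hu r (Ioc_subset_Icc_self hr)
  have hm := radialMean_pos hn hF hpos r
  have hp' : 0 < p + 1 := by linarith
  have hbracket := nonpos_of_mul_nonpos_right hP (pow_pos hr.1 n)
  have hle : k / (k + 1) * (r ^ 2 * radialSlope n k c F r)
      ≤ n / (p + 1) * radialProfile n k c F r := by
    have hdrop : 0 ≤ n / (p + 1) * (radialProfile n k c F r * radialProfile n k c F r ^ p) := by
      positivity
    exact le_of_mul_le_mul_right (by linarith) hm
  rw [div_mul_eq_mul_div, div_le_iff₀ (by positivity)] at hle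
  rw [div_mul_eq_mul_div, le_div_iff₀ hk]
  calc r ^ 2 * radialSlope n k c F r * k
      ≤ n / (p + 1) * radialProfile n k c F r * (k + 1) := by linarith
    _ ≤ (n - 2 * k) / (k + 1) * radialProfile n k c F r * (k + 1) := by gcongr
    _ = (n - 2 * k) * radialProfile n k c F r := by field_simp

lemma rpow_div_mul_radialProfile_le (hn : n ≠ 0) (hk : 0 < k) (hc : 0 < c) (hp : -1 < p)
    (hcrit : n / (p + 1) ≤ (n - 2 * k) / (k + 1)) (hF : Continuous F) (hpos : ∀ s, 0 < F s)
    (hu : ∀ r ∈ Icc 0 R, 0 < radialProfile n k c F r)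
    (hFu : ∀ r ∈ Icc 0 R, F r = radialProfile n k c F r ^ p) {r : ℝ} (hr : r ∈ Ioc 0 R) :
    (r / R) ^ ((n - 2 * k) / k) * radialProfile n k c F r ≤ radialProfile n k c F R := by
  refine rpow_div_mul_le_of_hasDerivAt hr.1 hr.2 (hasDerivAt_radialProfile n hk.le c hF)
    fun s hs => ?_
  have hslope := sq_mul_radialSlope_le hn hk hc hp hcrit hF hpos hu hFu
    ⟨hr.1.trans hs.1, hs.2.le⟩
  linarith

end Pohozaev

section Truncation

/-- A function with the decay `r ^ (-δ)` of a solution `u` with `r ^ δ * u` nondecreasing,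
constant on `[0, r₀]` and with room below the value `1 / 2` that solutions have at `r₀`. -/
def decayBarrier (r₀ δ r : ℝ) : ℝ := 1 / 4 * (r₀ / max r₀ r) ^ δ

lemma decayBarrier_pos {r₀ : ℝ} (hr₀ : 0 < r₀) (δ r : ℝ) : 0 < decayBarrier r₀ δ r := by
  have := lt_max_of_lt_left (c := r) hr₀
  unfold decayBarrier
  positivity

lemma continuous_decayBarrier {r₀ : ℝ} (hr₀ : 0 < r₀) (δ : ℝ) :
    Continuous (decayBarrier r₀ δ) := by
  have hmax (r : ℝ) : 0 < max r₀ r := lt_max_of_lt_left hr₀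
  exact continuous_const.mul ((continuous_const.div (by fun_prop) fun r => (hmax r).ne').rpow_const
    fun r => .inl (div_pos hr₀ (hmax r)).ne')

lemma antitone_decayBarrier {r₀ δ : ℝ} (hr₀ : 0 < r₀) (hδ : 0 ≤ δ) :
    Antitone (decayBarrier r₀ δ) := by
  intro r s hrs
  have := lt_max_of_lt_left (c := r) hr₀
  unfold decayBarrier
  gcongr

lemma decayBarrier_of_le {r₀ r : ℝ} (hr₀ : 0 < r₀) (δ : ℝ) (hr : r ≤ r₀) :
    decayBarrier r₀ δ r = 1 / 4 := by
  rw [decayBarrier, max_eq_left hr, div_self hr₀.ne', one_rpow, mul_one]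

lemma decayBarrier_of_ge {r₀ r : ℝ} (δ : ℝ) (hr : r₀ ≤ r) :
    decayBarrier r₀ δ r = 1 / 4 * (r₀ / r) ^ δ := by
  rw [decayBarrier, max_eq_right hr]

lemma decayBarrier_le {r₀ δ : ℝ} (hr₀ : 0 < r₀) (hδ : 0 ≤ δ) (r : ℝ) :
    decayBarrier r₀ δ r ≤ 1 / 4 :=
  (antitone_decayBarrier hr₀ hδ (min_le_left r r₀)).trans_eq
    (decayBarrier_of_le hr₀ δ (min_le_right r r₀))

/-- The source `y ^ p` with `y` truncated to take values in `[η, 1]`. -/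
def truncatedSource (p : ℝ) (η y : ℝ → ℝ) (s : ℝ) : ℝ := max (η s) (min (y s) 1) ^ p

variable {p : ℝ} {η y z : ℝ → ℝ}

lemma truncatedSource_eq (p : ℝ) {s : ℝ} (hη : η s ≤ y s) (hy : y s ≤ 1) :
    truncatedSource p η y s = y s ^ p := by
  rw [truncatedSource, min_eq_left hy, max_eq_right hη]

lemma truncatedSource_pos (p : ℝ) (hη₀ : ∀ s, 0 < η s) (y : ℝ → ℝ) (s : ℝ) :
    0 < truncatedSource p η y s :=
  rpow_pos_of_pos (lt_max_of_lt_left (hη₀ s)) p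

lemma continuous_truncatedSource (p : ℝ) (hη : Continuous η) (hη₀ : ∀ s, 0 < η s)
    (hy : Continuous y) : Continuous (truncatedSource p η y) :=
  (hη.max (hy.min continuous_const)).rpow_const fun s => .inl (lt_max_of_lt_left (hη₀ s)).ne'

lemma truncatedSource_le_one (hp : 0 ≤ p) (hη₀ : ∀ s, 0 < η s) (hη₁ : ∀ s, η s ≤ 1)
    (y : ℝ → ℝ) (s : ℝ) : truncatedSource p η y s ≤ 1 :=
  rpow_le_one (lt_max_of_lt_left (hη₀ s)).le (max_le (hη₁ s) (min_le_right _ _)) hp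

lemma rpow_le_truncatedSource (hp : 0 ≤ p) (hη₀ : ∀ s, 0 < η s) (hη : Antitone η) (y : ℝ → ℝ)
    {s t : ℝ} (hst : s ≤ t) : η t ^ p ≤ truncatedSource p η y s :=
  rpow_le_rpow (hη₀ t).le ((hη hst).trans (le_max_left _ _)) hp

lemma abs_truncatedSource_sub_le (hp : 1 ≤ p) (hη₀ : ∀ s, 0 < η s) (hη₁ : ∀ s, η s ≤ 1)
    (y z : ℝ → ℝ) (s : ℝ) :
    |truncatedSource p η y s - truncatedSource p η z s| ≤ p * |y s - z s| := by
  have hmem (x : ℝ) : max (η s) (min x 1) ∈ Ioc 0 1 :=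
    ⟨lt_max_of_lt_left (hη₀ s), max_le (hη₁ s) (min_le_right _ _)⟩
  refine (abs_rpow_sub_rpow_le_of_one_le hp (hmem _) (hmem _)).trans
    (mul_le_mul_of_nonneg_left ?_ (by linarith))
  calc |max (η s) (min (y s) 1) - max (η s) (min (z s) 1)|
      ≤ |min (y s) 1 - min (z s) 1| := by
        simpa using abs_max_sub_max_le_max (η s) (min (y s) 1) (η s) (min (z s) 1)
    _ ≤ |y s - z s| := by simpa using abs_min_sub_min_le_max (y s) 1 (z s) 1

variable {n : ℕ} {k c : ℝ}

-- The barrier keeps the `k`-th root away from its singularity at `0`.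
lemma abs_radialSlope_truncatedSource_sub_le (hn : n ≠ 0) (hk : 1 ≤ k) (hc : 0 < c) (hp : 1 ≤ p)
    (hη : Continuous η) (hη_anti : Antitone η) (hη₀ : ∀ s, 0 < η s) (hη₁ : ∀ s, η s ≤ 1)
    (hy : Continuous y) (hz : Continuous z) {t M : ℝ} (ht : 0 ≤ t)
    (hM : ∀ s ∈ Icc 0 t, |y s - z s| ≤ M) :
    |radialSlope n k c (truncatedSource p η y) t - radialSlope n k c (truncatedSource p η z) t|
      ≤ k⁻¹ * (c * η t ^ p) ^ (k⁻¹ - 1) * (c * p) * M := by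
  have hp₀ : 0 ≤ p := by linarith
  rw [← uIcc_of_le ht] at hM
  have hsource_sub (s : ℝ) (hs : s ∈ uIcc 0 t) :
      |truncatedSource p η y s - truncatedSource p η z s| ≤ p * M :=
    (abs_truncatedSource_sub_le hp hη₀ hη₁ y z s).trans
      (mul_le_mul_of_nonneg_left (hM s hs) hp₀)
  have hlower (x : ℝ → ℝ) (s : ℝ) (hs : s ∈ uIcc 0 t) : η t ^ p ≤ truncatedSource p η x s :=
    rpow_le_truncatedSource hp₀ hη₀ hη_anti x (uIcc_of_le ht ▸ hs).2
  exact (abs_radialSlope_sub_le hn hk hc (continuous_truncatedSource p hη hη₀ hy)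
    (continuous_truncatedSource p hη hη₀ hz) (rpow_pos_of_pos (hη₀ t) p) (hlower y) (hlower z)
    hsource_sub).trans_eq (by ring)

lemma isVolterraLipschitz_truncated (hn : n ≠ 0) (hk : 1 ≤ k) (hc : 0 < c) (hp : 1 ≤ p)
    (hη : Continuous η) (hη_anti : Antitone η) (hη₀ : ∀ s, 0 < η s) (hη₁ : ∀ s, η s ≤ 1) :
    IsVolterraLipschitz (fun y t => -(t * radialSlope n k c (truncatedSource p η y) t))
      fun t => |t| * (c ^ k⁻¹ + k⁻¹ * (c * η t ^ p) ^ (k⁻¹ - 1) * (c * p)) := by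
  have hk₀ : 0 ≤ k := by linarith
  have hηp (t : ℝ) : 0 < c * η t ^ p := mul_pos hc (rpow_pos_of_pos (hη₀ t) p)
  have hlip (t : ℝ) : 0 ≤ k⁻¹ * (c * η t ^ p) ^ (k⁻¹ - 1) * (c * p) := by
    have := hηp t
    positivity
  have hsource {y : ℝ → ℝ} (hy : Continuous y) := continuous_truncatedSource p hη hη₀ hy
  refine ⟨?_, fun hy => ?_, fun {y} hy t _ => ?_, fun {y z} hy hz t M ht hM => ?_⟩
  · have hpow : Continuous fun t => (c * η t ^ p) ^ (k⁻¹ - 1) :=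
      (continuous_const.mul (hη.rpow_const fun t => .inl (hη₀ t).ne')).rpow_const
        fun t => .inl (hηp t).ne'
    fun_prop
  · exact (continuous_id.mul (continuous_radialSlope n hk₀ c (hsource hy))).neg
  · have hpos := truncatedSource_pos p hη₀ y
    have hle := radialSlope_le hn hk₀ hc (hsource hy) hpos
      (truncatedSource_le_one (by linarith) hη₀ hη₁ y) t
    rw [norm_neg, norm_mul, norm_eq_abs,
      norm_of_nonneg (radialSlope_pos hn hc (hsource hy) hpos t).le]
    gcongr
    linarith [hlip t]
  · have hM₀ : 0 ≤ M := (norm_nonneg _).trans (hM 0 (left_mem_Icc.2 ht))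
    have hsub := abs_radialSlope_truncatedSource_sub_le hn hk hc hp hη hη_anti hη₀ hη₁ hy hz ht hM
    rw [neg_sub_neg, ← mul_sub, norm_mul, norm_eq_abs, norm_eq_abs, abs_sub_comm, mul_assoc,
      add_mul]
    gcongr
    exact hsub.trans (le_add_of_nonneg_left (by positivity))

theorem exists_eq_truncatedSource_radialProfile (hn : n ≠ 0) (hk : 1 ≤ k) (hc : 0 < c)
    (hp : 1 ≤ p) (hη : Continuous η) (hη_anti : Antitone η) (hη₀ : ∀ s, 0 < η s)
    (hη₁ : ∀ s, η s ≤ 1) :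
    ∃ F, Continuous F ∧ (∀ s, 0 < F s) ∧ (∀ s, F s ≤ 1) ∧
      ∀ r, 0 ≤ r → F r = truncatedSource p η (radialProfile n k c F) r := by
  obtain ⟨y, hy, hfix⟩ := (isVolterraLipschitz_truncated hn hk hc hp hη hη_anti hη₀
    hη₁).exists_eq_add_integral 1
  refine ⟨truncatedSource p η y, continuous_truncatedSource p hη hη₀ hy,
    truncatedSource_pos p hη₀ y, truncatedSource_le_one (by linarith) hη₀ hη₁ y, fun r hr => ?_⟩
  have hyr : y r = radialProfile n k c (truncatedSource p η y) r := by
    rw [hfix r hr, intervalIntegral.integral_neg, ← sub_eq_add_neg, radialProfile]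
  rw [truncatedSource, truncatedSource, hyr]

end Truncation

section EntireSolution

variable {n : ℕ} {F : ℝ → ℝ}

lemma sub_two_mul_div_nonneg {k p : ℝ} (hk : 0 < k) (hp : -1 < p)
    (hcrit : n / (p + 1) ≤ (n - 2 * k) / (k + 1)) : 0 ≤ (n - 2 * k) / k := by
  have hratio := (div_nonneg n.cast_nonneg (by linarith)).trans hcrit
  rw [le_div_iff₀ (by linarith), zero_mul] at hratio
  exact div_nonneg hratio hk.le

-- `r ^ δ * u` is nondecreasing past `r₀`, so `u` keeps the factor `2` by which it exceeds the
-- barrier there.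
lemma decayBarrier_lt_radialProfile {k c p r₀ : ℝ} (hn : n ≠ 0) (hk : 0 < k)
    (hc : 0 < c) (hp : -1 < p) (hcrit : n / (p + 1) ≤ (n - 2 * k) / (k + 1)) (hr₀ : 0 < r₀)
    (hcr₀ : c ^ k⁻¹ * r₀ ^ 2 ≤ 1) (hF : Continuous F) (hpos : ∀ s, 0 < F s) (hF₁ : ∀ s, F s ≤ 1)
    (hFu : ∀ r, 0 ≤ r → F r = truncatedSource p (decayBarrier r₀ ((n - 2 * k) / k))
      (radialProfile n k c F) r) {r : ℝ} (hr : 0 ≤ r) :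
    decayBarrier r₀ ((n - 2 * k) / k) r < radialProfile n k c F r := by
  set δ := (n - 2 * k) / k
  have hδ : 0 ≤ δ := sub_two_mul_div_nonneg hk hp hcrit
  have hhalf {b : ℝ} (hb : 0 ≤ b) (hbr₀ : b ≤ r₀) : 1 / 2 ≤ radialProfile n k c F b := by
    have hle := one_sub_le_radialProfile hn hk.le hc hF hpos hF₁ hb
    have hcb : c ^ k⁻¹ * b ^ 2 ≤ c ^ k⁻¹ * r₀ ^ 2 := by gcongr
    linarith
  refine lt_of_forall_le_imp_lt (continuous_decayBarrier hr₀ δ)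
    (continuous_radialProfile n hk.le c hF) ?_ (fun b hb hle => ?_) hr
  · rw [radialProfile_zero]
    linarith [decayBarrier_le hr₀ hδ 0]
  rcases le_total b r₀ with hbr₀ | hr₀b
  · linarith [decayBarrier_le hr₀ hδ b, hhalf hb hbr₀]
  · have hpow : 0 < (r₀ / b) ^ δ := rpow_pos_of_pos (div_pos hr₀ (hr₀.trans_le hr₀b)) δ
    have hdecay := rpow_div_mul_radialProfile_le hn hk hc hp hcrit hF hpos
      (fun s hs => (decayBarrier_pos hr₀ δ s).trans_le (hle s hs))
      (fun s hs => (hFu s hs.1).trans (truncatedSource_eq p (hle s hs)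
        (radialProfile_le_one hn hc hF hpos hs.1))) ⟨hr₀, hr₀b⟩
    rw [decayBarrier_of_ge δ hr₀b]
    nlinarith [hhalf hr₀.le le_rfl]

theorem exists_eq_radialProfile_rpow {k c p : ℝ} (hn : n ≠ 0) (hk : 1 ≤ k)
    (hc : 0 < c) (hp : 1 ≤ p) (hcrit : n / (p + 1) ≤ (n - 2 * k) / (k + 1)) :
    ∃ F, Continuous F ∧ (∀ s, 0 < F s) ∧ (∀ r, 0 ≤ r → 0 < radialProfile n k c F r) ∧
      ∀ r, 0 ≤ r → F r = radialProfile n k c F r ^ p := by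
  have hk₀ : 0 < k := by linarith
  obtain ⟨r₀, hr₀, hcr₀⟩ : ∃ r₀ : ℝ, 0 < r₀ ∧ c ^ k⁻¹ * r₀ ^ 2 ≤ 1 := by
    have hck : 0 < c ^ k⁻¹ := rpow_pos_of_pos hc _
    refine ⟨√(c ^ k⁻¹)⁻¹, by positivity, ?_⟩
    rw [sq_sqrt (by positivity), mul_inv_cancel₀ hck.ne']
  have hδ : 0 ≤ (n - 2 * k) / k := sub_two_mul_div_nonneg hk₀ (by linarith) hcrit
  obtain ⟨F, hF, hpos, hF₁, hFu⟩ := exists_eq_truncatedSource_radialProfile hn hk hc hp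
    (continuous_decayBarrier hr₀ _) (antitone_decayBarrier hr₀ hδ) (decayBarrier_pos hr₀ _)
    fun s => (decayBarrier_le hr₀ hδ s).trans (by norm_num)
  have hlt {r : ℝ} (hr : 0 ≤ r) := decayBarrier_lt_radialProfile hn hk₀ hc (by linarith) hcrit hr₀
    hcr₀ hF hpos hF₁ hFu hr
  exact ⟨F, hF, hpos, fun r hr => (decayBarrier_pos hr₀ _ r).trans (hlt hr), fun r hr =>
    (hFu r hr).trans (truncatedSource_eq p (hlt hr).le (radialProfile_le_one hn hc hF hpos hr))⟩

variable {k : ℕ} {c ρ : ℝ}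

lemma binomC_pos (hkn : k ≤ n) : 0 < binomC n k :=
  Nat.cast_pos.2 (Nat.choose_pos (Nat.sub_le_sub_right hkn 1))

lemma hasDerivAt_const_mul_radialProfile (n k : ℕ) (c ρ : ℝ) (hF : Continuous F) (r : ℝ) :
    HasDerivAt (fun r => ρ * radialProfile n k c F r) (-(r * (ρ * radialSlope n k c F r))) r :=
  ((hasDerivAt_radialProfile n k.cast_nonneg c hF r).const_mul ρ).congr_deriv (by ring)

lemma flux_const_mul_radialProfile (hk : k ≠ 0) (hkn : k ≤ n) (hc : 0 < c) (hρ : 0 < ρ)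
    (hF : Continuous F) (hpos : ∀ s, 0 < F s) {r : ℝ} (hr : 0 ≤ r) :
    flux n k (fun r => ρ * radialProfile n k c F r) r =
      -(ρ ^ k * c) * (r ^ n * radialMean n F r) := by
  have hn : n ≠ 0 := by omega
  have hG := radialSlope_pos (k := k) hn hc hF hpos r
  have hpow : r ^ n = r ^ (n - k) * r ^ k := by rw [← pow_add, Nat.sub_add_cancel hkn]
  have hGpow := radialSlope_rpow hn (Nat.cast_ne_zero.2 hk) hc hF hpos r
  rw [rpow_natCast] at hGpow
  rw [flux, (hasDerivAt_const_mul_radialProfile n k c ρ hF r).deriv, abs_neg,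
    abs_of_nonneg (by positivity), mul_neg, mul_assoc, pow_sub_one_mul hk, hpow, mul_pow, mul_pow,
    hGpow]
  ring

lemma hasDerivAt_flux_const_mul_radialProfile (hk : k ≠ 0) (hkn : k ≤ n) (hc : 0 < c)
    (hρ : 0 < ρ) (hF : Continuous F) (hpos : ∀ s, 0 < F s) {r : ℝ} (hr : 0 < r) :
    HasDerivAt (flux n k fun r => ρ * radialProfile n k c F r)
      (-(ρ ^ k * c) * (n * (r ^ (n - 1) * F r))) r :=
  ((hasDerivAt_pow_mul_radialMean (by omega) hF r).const_mul _).congr_of_eventuallyEq <|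
    (eventually_gt_nhds hr).mono fun _ hs =>
      flux_const_mul_radialProfile hk hkn hc hρ hF hpos hs.le

lemma isRegularSolution_const_mul_radialProfile {p : ℝ} (hk : k ≠ 0) (hkn : k ≤ n) (hρ : 0 < ρ)
    (hc : c = k / (n * binomC n k) * ρ ^ (p - k)) (hF : Continuous F) (hpos : ∀ s, 0 < F s)
    (hu : ∀ r, 0 ≤ r → 0 < radialProfile n k c F r)
    (hFu : ∀ r, 0 ≤ r → F r = radialProfile n k c F r ^ p) :
    IsRegularSolution n k p ρ fun r => ρ * radialProfile n k c F r := by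
  have hn : n ≠ 0 := by omega
  have hbinom := binomC_pos hkn
  have hc₀ : 0 < c := hc ▸ by positivity
  have hk₀ : (0 : ℝ) ≤ k := k.cast_nonneg
  have hG : Continuous fun r => ρ * radialSlope n k c F r :=
    (continuous_radialSlope n hk₀ c hF).const_mul ρ
  have hderiv := hasDerivAt_const_mul_radialProfile n k c ρ hF
  refine ⟨?_, ?_, ?_, fun r hr => mul_pos hρ (hu r hr), fun r hr => ?_, ?_⟩
  · refine (contDiff_one_iff_deriv.2 ⟨fun r => (hderiv r).differentiableAt, ?_⟩).contDiffOn
    exact (funext fun r => (hderiv r).deriv) ▸ (continuous_id.mul hG).neg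
  · rw [(hderiv 0).hasDerivWithinAt.derivWithin (uniqueDiffOn_Ici 0 0 self_mem_Ici), zero_mul,
      neg_zero]
  · rw [radialProfile_zero, mul_one]
  · refine (hasDerivAt_flux_const_mul_radialProfile hk hkn hc₀ hρ hF hpos hr).congr_deriv ?_
    rw [hFu r hr.le, mul_rpow hρ.le (hu r hr.le).le, hc, rpow_sub hρ, rpow_natCast]
    field_simp
  · refine contDiff_two_comp_norm (u := fun r => -(ρ * radialProfile n k c F r)) hG
      ((continuous_radialSlopeLogDeriv hn hk₀ c hF hpos).const_mul ρ) ?_ (fun r hr => ?_)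
      fun r => (hderiv r).neg.congr_deriv (neg_neg _)
    · rw [radialSlopeLogDeriv_zero hn k c hpos, mul_zero]
    · exact ((hasDerivAt_radialSlope hn hc₀ hF hpos hr.ne').const_mul ρ).congr_deriv
        (mul_div_assoc _ _ _).symm

end EntireSolution

theorem exists_entire_regular_solution_general (n k : ℕ) (p ρ : ℝ) (hk : 1 ≤ k)
    (hkn : 2 * k < n) (hp : ((n : ℝ) + 2) * k / ((n : ℝ) - 2 * k) ≤ p) (hρ : 0 < ρ) :
    ∃ u : ℝ → ℝ, IsRegularSolution n k p ρ u := by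
  have hk' : (1 : ℝ) ≤ k := mod_cast hk
  have hkn' : (2 : ℝ) * k < n := mod_cast hkn
  have hbinom : 0 < binomC n k := binomC_pos (by omega)
  have hgap : 0 < (n : ℝ) - 2 * k := by linarith
  rw [div_le_iff₀ hgap] at hp
  have hp₁ : 1 ≤ p := le_of_mul_le_mul_right (by nlinarith) hgap
  have hcrit : n / (p + 1) ≤ ((n : ℝ) - 2 * k) / (k + 1) := by
    rw [div_le_div_iff₀ (by linarith) (by linarith)]
    linarith
  have hn : n ≠ 0 := by omega
  obtain ⟨F, hF, hpos, hu, hFu⟩ := exists_eq_radialProfile_rpow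
    (c := k / (n * binomC n k) * ρ ^ (p - k)) hn hk' (by positivity) hp₁ hcrit
  exact ⟨_, isRegularSolution_const_mul_radialProfile (by omega) (by omega) hρ rfl hF hpos hu hFu⟩

/-- existence of an entire regular solution with `u(0) = 1` when `p > p_so`. -/
theorem exists_entire_regular_solution (n k : ℕ) (p : ℝ)
    (hn : 3 ≤ n) (hk1 : 1 < k) (hk2 : 2 * k < n)
    (hp : ((n : ℝ) + 2) * k / ((n : ℝ) - 2 * k) < p) :
    ∃ u : ℝ → ℝ, IsRegularSolution n k p 1 u :=
  exists_entire_regular_solution_general n k p 1 hk1.le hk2 hp.le one_pos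

end KHessianPaper
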